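/- arXiv:1705.06211 — 2 statements merged into one kernel-verified Lean document; each statement's English description precedes it below -/
import Mathlib

section
/- Error bound for the exact Newton step with an approximate Hessian (bound on Term 1 of inequality (4.9)). Let F : ℝ^d → ℝ be twice continuously differentiable with M-Lipschitz Hessian and with ∇F(w*) = 0. Let A be a symmetric matrix with A ⪰ μ·I for some μ > 0 (hence invertible). Then for every w ∈ ℝ^d, ‖w − w* − A^{-1}∇F(w)‖ ≤ (M/(2μ))·‖w − w*‖² + (1/μ)·‖(A − ∇²F(w))(w − w*)‖. -/
open Matrix

/-- Matrix–vector multiplication, viewed on Euclidean space. -/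
noncomputable def matVec {d : ℕ} (A : Matrix (Fin d) (Fin d) ℝ) (v : EuclideanSpace ℝ (Fin d)) :
    EuclideanSpace ℝ (Fin d) := Matrix.toEuclideanCLM (𝕜 := ℝ) A v

theorem taylor_aux {E : Type*} [NormedAddCommGroup E] [NormedSpace ℝ E]
    (g : E → E) (H : E → E →L[ℝ] E) (M : ℝ) (hg : ∀ z, HasFDerivAt g (H z) z)
    (hlip : ∀ u z, ‖H u - H z‖ ≤ M * ‖u - z‖) (w v : E) :
    ‖g (w + v) - g w - H w v‖ ≤ M / 2 * ‖v‖ ^ 2 := by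
  have hline : ∀ t : ℝ, HasDerivAt (fun t : ℝ => w + t • v) v t := by
    intro t
    simpa using ((hasDerivAt_id t).smul_const v).const_add w
  have hr : ∀ t : ℝ, HasDerivAt (fun t : ℝ => g (w + t • v) - g w - t • H w v)
      (H (w + t • v) v - H w v) t := by
    intro t
    have h1 := (hg (w + t • v)).comp_hasDerivAt t (hline t)
    have h2 : HasDerivAt (fun t : ℝ => t • H w v) (H w v) t := by
      simpa using (hasDerivAt_id t).smul_const (H w v)
    exact (h1.sub_const (g w)).sub h2
  have hB : ∀ t : ℝ, HasDerivAt (fun t : ℝ => M / 2 * ‖v‖ ^ 2 * t ^ 2) (M * ‖v‖ ^ 2 * t) t := by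
    intro t
    have := (hasDerivAt_pow 2 t).const_mul (M / 2 * ‖v‖ ^ 2)
    refine this.congr_deriv ?_
    norm_num
    ring
  have key := image_norm_le_of_norm_deriv_right_le_deriv_boundary (a := (0 : ℝ)) (b := 1)
    (f := fun t : ℝ => g (w + t • v) - g w - t • H w v)
    (f' := fun t => H (w + t • v) v - H w v)
    (B := fun t : ℝ => M / 2 * ‖v‖ ^ 2 * t ^ 2) (B' := fun t => M * ‖v‖ ^ 2 * t)
    (fun t _ => (hr t).continuousAt.continuousWithinAt)
    (fun t _ => (hr t).hasDerivWithinAt)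
    (by simp) hB ?_ (x := 1) (by simp)
  · simpa using key
  · intro t ht
    have h1 : ‖(H (w + t • v) - H w) v‖ ≤ ‖H (w + t • v) - H w‖ * ‖v‖ :=
      ContinuousLinearMap.le_opNorm _ _
    have h2 := hlip (w + t • v) w
    rw [add_sub_cancel_left, norm_smul, Real.norm_of_nonneg ht.1] at h2
    calc ‖H (w + t • v) v - H w v‖ ≤ ‖H (w + t • v) - H w‖ * ‖v‖ := h1
      _ ≤ (M * (t * ‖v‖)) * ‖v‖ := by gcongr
      _ = M * ‖v‖ ^ 2 * t := by ring

theorem lower_aux {d : ℕ} (A : Matrix (Fin d) (Fin d) ℝ) (μ : ℝ)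
    (hA : (A - μ • 1).PosSemidef) (x : EuclideanSpace ℝ (Fin d)) :
    μ * ‖x‖ ≤ ‖Matrix.toEuclideanCLM (𝕜 := ℝ) A x‖ := by
  have h0 : 0 ≤ inner ℝ x (Matrix.toEuclideanCLM (𝕜 := ℝ) (A - μ • 1) x) := by
    have := hA.dotProduct_mulVec_nonneg (WithLp.ofLp x)
    rw [EuclideanSpace.inner_eq_star_dotProduct, dotProduct_comm]
    exact this
  rw [map_sub, map_smul, map_one] at h0
  simp only [_root_.sub_apply, _root_.smul_apply,
    one_apply_eq_self, inner_sub_right, inner_smul_right,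
    real_inner_self_eq_norm_sq] at h0
  have h1 := real_inner_le_norm x (Matrix.toEuclideanCLM (𝕜 := ℝ) A x)
  rcases (norm_nonneg x).eq_or_lt with h | h
  · rw [← h]; simp
  · refine le_of_mul_le_mul_left ?_ h
    nlinarith

/-- **Error bound for the exact Newton step with an approximate Hessian**
(bound on Term 1 of inequality (4.9)).  Let `F : ℝ^d → ℝ` be twice continuously
differentiable (with gradient `gF` and Hessian `HF`), with `M`-Lipschitz Hessian and
`∇F(w*) = 0`.  Let `A` be symmetric with `A ⪰ μ·I`, `μ > 0`.  Then for every `w`,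
`‖w − w* − A⁻¹∇F(w)‖ ≤ (M/(2μ))‖w − w*‖² + (1/μ)‖(A − ∇²F(w))(w − w*)‖`. -/
theorem exact_newton_step_bound
    {d : ℕ}
    (F : EuclideanSpace ℝ (Fin d) → ℝ)
    (gF : EuclideanSpace ℝ (Fin d) → EuclideanSpace ℝ (Fin d))
    (HF : EuclideanSpace ℝ (Fin d) → Matrix (Fin d) (Fin d) ℝ)
    (M μ : ℝ) (hμ : 0 < μ) (hM : 0 ≤ M)
    (hsmooth : ContDiff ℝ 2 F)
    (hgrad : ∀ z, HasGradientAt F (gF z) z)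
    (hhess : ∀ z, HasFDerivAt gF (Matrix.toEuclideanCLM (𝕜 := ℝ) (HF z)) z)
    (hHsymm : ∀ z, (HF z).IsHermitian)
    (hlip : ∀ u z, ‖Matrix.toEuclideanCLM (𝕜 := ℝ) (HF u - HF z)‖ ≤ M * ‖u - z‖)
    (wstar : EuclideanSpace ℝ (Fin d)) (hstar : gF wstar = 0)
    (A : Matrix (Fin d) (Fin d) ℝ) (hAsymm : A.IsHermitian)
    (hAlower : (A - μ • 1).PosSemidef) :
    ∀ w : EuclideanSpace ℝ (Fin d),
      ‖w - wstar - matVec A⁻¹ (gF w)‖ ≤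
        M / (2 * μ) * ‖w - wstar‖ ^ 2 + (1 / μ) * ‖matVec (A - HF w) (w - wstar)‖ := by
  intro w
  have hdet : IsUnit A.det := by
    have hpd : A.PosDef := by
      have h1 : (μ • (1 : Matrix (Fin d) (Fin d) ℝ)).PosDef := Matrix.PosDef.one.smul hμ
      have := h1.add_posSemidef hAlower
      simpa using this
    exact hpd.det_pos.ne'.isUnit
  have hT := taylor_aux gF (fun z => Matrix.toEuclideanCLM (𝕜 := ℝ) (HF z)) M hhess
    (by intro u z; rw [← map_sub]; exact hlip u z) w (wstar - w)
  rw [add_sub_cancel, hstar, norm_sub_rev wstar w] at hT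
  have hL := lower_aux A μ hAlower (w - wstar - matVec A⁻¹ (gF w))
  have hinv : Matrix.toEuclideanCLM (𝕜 := ℝ) A (matVec A⁻¹ (gF w)) = gF w := by
    unfold matVec
    rw [← ContinuousLinearMap.mul_apply, ← map_mul, Matrix.mul_nonsing_inv _ hdet, map_one]
    rfl
  have heq : Matrix.toEuclideanCLM (𝕜 := ℝ) A (w - wstar - matVec A⁻¹ (gF w)) =
      matVec (A - HF w) (w - wstar) +
      (0 - gF w - Matrix.toEuclideanCLM (𝕜 := ℝ) (HF w) (wstar - w)) := by
    rw [map_sub, hinv]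
    unfold matVec
    rw [map_sub (Matrix.toEuclideanCLM (𝕜 := ℝ)) A (HF w), _root_.sub_apply, map_sub, ← neg_sub w wstar, map_neg, map_sub]
    abel
  rw [heq] at hL
  have h3 := hL.trans (norm_add_le _ _)
  have h4 : M / (2 * μ) * ‖w - wstar‖ ^ 2 + (1 / μ) * ‖matVec (A - HF w) (w - wstar)‖ =
      (‖matVec (A - HF w) (w - wstar)‖ + M / 2 * ‖w - wstar‖ ^ 2) / μ := by
    field_simp
    ring
  rw [h4, le_div_iff₀ hμ]
  linarith
end

section
/- Polynomial approximation lemma underlying the CG eigenvalue-gap bound (3.1). Let 0 < λ_1 ≤ λ_2 ≤ … ≤ λ_d be real numbers and let 1 ≤ r ≤ d. Then there exists a real polynomial q of degree at most r with q(0) = 1 such that |q(λ_i)| ≤ (λ_{d−r+1} − λ_1)/(λ_{d−r+1} + λ_1) for every i = 1, …, d. (One may take q(t) = (1 − 2t/(λ_1 + λ_{d−r+1}))·∏_{j=d−r+2}^{d} (1 − t/λ_j).) -/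
/-- **Polynomial approximation lemma underlying the CG eigenvalue-gap bound (3.1).**
Given `0 < λ_1 ≤ … ≤ λ_d` (here `lam : Fin d → ℝ` is monotone, `lam ⟨0,_⟩` is `λ_1`,
and `lam ⟨d-r,_⟩` is `λ_{d-r+1}` in 1-based indexing) and `1 ≤ r ≤ d`, there is a real
polynomial `q` of degree at most `r` with `q 0 = 1` and
`|q (λ_i)| ≤ (λ_{d−r+1} − λ_1)/(λ_{d−r+1} + λ_1)` for every `i`. -/
theorem cg_polynomial_lemma
    {d : ℕ} (r : ℕ) (hr1 : 1 ≤ r) (hrd : r ≤ d)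
    (lam : Fin d → ℝ) (hmono : Monotone lam)
    (hpos : 0 < lam ⟨0, by omega⟩) :
    ∃ q : Polynomial ℝ, q.natDegree ≤ r ∧ q.eval 0 = 1 ∧
      ∀ i : Fin d, |q.eval (lam i)| ≤
        (lam ⟨d - r, by omega⟩ - lam ⟨0, by omega⟩) /
          (lam ⟨d - r, by omega⟩ + lam ⟨0, by omega⟩) := by
  obtain ⟨k, hk⟩ : ∃ k : Fin d, k = ⟨d - r, by omega⟩ := ⟨_, rfl⟩
  obtain ⟨z, hz⟩ : ∃ z : Fin d, z = ⟨0, by omega⟩ := ⟨_, rfl⟩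
  rw [← hk, ← hz]
  rw [← hz] at hpos
  have hzi : ∀ i, lam z ≤ lam i := fun i => hmono (by rw [hz]; exact Fin.mk_le_of_le_val (Nat.zero_le _))
  have hp : ∀ i, 0 < lam i := fun i => lt_of_lt_of_le hpos (hzi i)
  have hs : 0 < lam k + lam z := add_pos (hp k) hpos
  have hB : 0 ≤ (lam k - lam z) / (lam k + lam z) :=
    div_nonneg (sub_nonneg.2 (hzi k)) hs.le
  have hlin : ∀ c : ℝ, (1 - Polynomial.C c * Polynomial.X : Polynomial ℝ).natDegree ≤ 1 := by
    intro c
    compute_degree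
  refine ⟨(1 - Polynomial.C (2 / (lam k + lam z)) * Polynomial.X) *
    ∏ j ∈ Finset.Ioi k, (1 - Polynomial.C (1 / lam j) * Polynomial.X), ?_, ?_, ?_⟩
  · have h2 : (∏ j ∈ Finset.Ioi k,
        (1 - Polynomial.C (1 / lam j) * Polynomial.X : Polynomial ℝ)).natDegree ≤ r - 1 := by
      refine (Polynomial.natDegree_prod_le _ _).trans ?_
      refine (Finset.sum_le_card_nsmul _ _ 1 fun j _ => hlin _).trans ?_
      have hkv : (k : ℕ) = d - r := by rw [hk]
      simp only [Fin.card_Ioi, smul_eq_mul, hkv]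
      omega
    have h1 := hlin (2 / (lam k + lam z))
    refine Polynomial.natDegree_mul_le.trans ?_
    omega
  · simp [Polynomial.eval_prod]
  · intro i
    rw [Polynomial.eval_mul, Polynomial.eval_prod]
    by_cases hi : k < i
    · rw [Finset.prod_eq_zero (Finset.mem_Ioi.2 hi)]
      · simpa using hB
      · simp [(hp i).ne']
    · have hik : lam i ≤ lam k := hmono (not_lt.1 hi)
      rw [abs_mul]
      have h1 : |Polynomial.eval (lam i)
          (1 - Polynomial.C (2 / (lam k + lam z)) * Polynomial.X)| ≤
          (lam k - lam z) / (lam k + lam z) := by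
        have he : Polynomial.eval (lam i)
          (1 - Polynomial.C (2 / (lam k + lam z)) * Polynomial.X) =
            (lam k + lam z - 2 * lam i) / (lam k + lam z) := by
          simp only [Polynomial.eval_sub, Polynomial.eval_one, Polynomial.eval_mul,
            Polynomial.eval_C, Polynomial.eval_X]
          field_simp
        rw [he, abs_div, abs_of_pos hs]
        refine div_le_div_of_nonneg_right ?_ hs.le
        have := hzi i
        rw [abs_le]
        constructor <;> linarith
      have h2 : |∏ j ∈ Finset.Ioi k, Polynomial.eval (lam i)
          (1 - Polynomial.C (1 / lam j) * Polynomial.X)| ≤ 1 := by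
        rw [Finset.abs_prod]
        refine Finset.prod_le_one (fun _ _ => abs_nonneg _) fun j hj => ?_
        have hij : lam i ≤ lam j := hik.trans (hmono (Finset.mem_Ioi.1 hj).le)
        have h3 : lam i / lam j ≤ 1 := (div_le_one (hp j)).2 hij
        have h4 : 0 < lam i / lam j := div_pos (hp i) (hp j)
        have he : Polynomial.eval (lam i)
          (1 - Polynomial.C (1 / lam j) * Polynomial.X) = 1 - lam i / lam j := by
          simp only [Polynomial.eval_sub, Polynomial.eval_one, Polynomial.eval_mul,
            Polynomial.eval_C, Polynomial.eval_X]
          ring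
        rw [he, abs_le]
        constructor <;> linarith
      exact (mul_le_mul h1 h2 (abs_nonneg _) hB).trans (mul_one _).le
end
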